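/- (Jörgens' theorem) Let u : ℝ² → ℝ be a smooth function satisfying det D²u(x) = 1 for every x ∈ ℝ². Then u is a quadratic polynomial, i.e. there exist a symmetric 2×2 real matrix A, a vector b ∈ ℝ², and c ∈ ℝ such that u(x) = (1/2)⟨A x, x⟩ + ⟨b, x⟩ + c for all x ∈ ℝ². -/

import Mathlib

open Real

/-- Second partial derivative matrix (Hessian) of `u` at `x`. -/
noncomputable def hessianMatrix {n : ℕ} (u : EuclideanSpace ℝ (Fin n) → ℝ)
    (x : EuclideanSpace ℝ (Fin n)) : Matrix (Fin n) (Fin n) ℝ :=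
  Matrix.of fun i j =>
    fderiv ℝ (fun y => fderiv ℝ u y (EuclideanSpace.single j 1)) x (EuclideanSpace.single i 1)

/-- `u` is a quadratic polynomial. -/
def IsQuadraticPoly {n : ℕ} (u : EuclideanSpace ℝ (Fin n) → ℝ) : Prop :=
  ∃ (A : Matrix (Fin n) (Fin n) ℝ) (b : Fin n → ℝ) (c : ℝ), A.IsSymm ∧
    ∀ x, u x = (1/2) * (∑ i, ∑ j, A i j * x i * x j) + (∑ i, b i * x i) + c

/-!
This is Nitsche's argument. Since `det D²u = 1`, the Hessian is definite of constant sign, so up to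
replacing `u` by `-u` the gradient `f = ∇u` is a monotone operator. Hence `id + f` expands distances
and is a diffeomorphism of the plane, and the Cayley transform `(id - f) ∘ (id + f)⁻¹` is
1-Lipschitz. Writing the symmetric map `D²u` on `ℂ` as `v ↦ a v + b v̄`, the equation becomes
`a² - |b|² = 1`, which is exactly what makes the differential of the Cayley transform conjugate
linear: it is `w ↦ -(b / (1 + a)) w̄`. The conjugate of the Cayley transform is therefore an entire
function with bounded derivative, so `b / (1 + a)` is constant by Liouville's theorem, and together
with `a² - |b|² = 1` this determines `a` and `b`.
-/

open Function

open scoped ComplexConjugate InnerProductSpace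

section GlobalInverse

theorem isClosed_range_of_antilipschitzWith {X Y : Type*} [PseudoEMetricSpace X]
    [CompleteSpace X] [EMetricSpace Y] {K : NNReal} {F : X → Y} (hF : AntilipschitzWith K F)
    (hc : Continuous F) : IsClosed (Set.range F) := by
  refine IsSeqClosed.isClosed fun y l hy hl => ?_
  choose x hx using hy
  have hcauchy : CauchySeq x := by
    have hFx : CauchySeq (F ∘ x) := by simpa only [comp_def, hx] using hl.cauchySeq
    rw [cauchySeq_iff_tendsto] at hFx ⊢
    rw [← Prod.map_comp_map, ← Filter.tendsto_comap_iff] at hFx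
    exact hFx.mono_right hF.comap_uniformity_le
  obtain ⟨x₀, hx₀⟩ := cauchySeq_tendsto_of_complete hcauchy
  have hFl : Filter.Tendsto y Filter.atTop (nhds (F x₀)) := by
    simpa only [comp_def, hx] using (hc.tendsto x₀).comp hx₀
  exact ⟨x₀, tendsto_nhds_unique hFl hl⟩

variable {E F : Type*} [NormedAddCommGroup E] [NormedSpace ℝ E] [CompleteSpace E]
  [NormedAddCommGroup F] [NormedSpace ℝ F] {Φ : E → F} {Φ' : E → E →L[ℝ] F} {K : NNReal}

theorem surjective_of_antilipschitzWith_of_hasStrictFDerivAt (hΦ : AntilipschitzWith K Φ)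
    (hΦ' : ∀ x, HasStrictFDerivAt Φ (Φ' x) x) (hinv : ∀ x, (Φ' x).IsInvertible) :
    Surjective Φ := by
  have hopen : IsOpenMap Φ := by
    choose e he using hinv
    exact isOpenMap_of_hasStrictFDerivAt_equiv (f' := e) fun x => by simpa only [he] using hΦ' x
  have hclosed : IsClosed (Set.range Φ) := isClosed_range_of_antilipschitzWith hΦ <|
    continuous_iff_continuousAt.2 fun x => (hΦ' x).continuousAt
  exact Set.range_eq_univ.1 <| IsClopen.eq_univ ⟨hclosed, hopen.isOpen_range⟩ (Set.range_nonempty Φ)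

end GlobalInverse

section MonotoneOperator

variable {E : Type*} [NormedAddCommGroup E] [InnerProductSpace ℝ E]

theorem norm_le_norm_add_of_inner_nonneg {a b : E} (h : 0 ≤ ⟪b, a⟫_ℝ) : ‖a‖ ≤ ‖a + b‖ := by
  refine le_of_sq_le_sq ?_ (norm_nonneg _)
  rw [norm_add_sq_real, real_inner_comm]
  nlinarith [sq_nonneg ‖b‖]

theorem norm_sub_le_norm_add_of_inner_nonneg {a b : E} (h : 0 ≤ ⟪b, a⟫_ℝ) :
    ‖a - b‖ ≤ ‖a + b‖ := by
  refine le_of_sq_le_sq ?_ (norm_nonneg _)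
  rw [norm_add_sq_real, norm_sub_sq_real, real_inner_comm]
  linarith

/-- Monotone operators in the sense of Minty and Browder; the gradient of a convex function is the
model example. -/
def IsMonotoneOperator (f : E → E) : Prop :=
  ∀ x y, 0 ≤ ⟪f x - f y, x - y⟫_ℝ

theorem isMonotoneOperator_clm_iff {T : E →L[ℝ] E} :
    IsMonotoneOperator T ↔ ∀ v, 0 ≤ ⟪T v, v⟫_ℝ :=
  ⟨fun h v => by simpa using h v 0, fun h x y => by simpa using h (x - y)⟩

theorem isMonotoneOperator_of_hasFDerivAt {f : E → E} {f' : E → E →L[ℝ] E}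
    (hf : ∀ x, HasFDerivAt f (f' x) x) (hf' : ∀ x, IsMonotoneOperator (f' x)) :
    IsMonotoneOperator f := fun x y => by
  have hderiv (t : ℝ) : HasDerivAt (fun t : ℝ => ⟪f (AffineMap.lineMap y x t), x - y⟫_ℝ)
      ⟪f' (AffineMap.lineMap y x t) (x - y), x - y⟫_ℝ t := by
    simpa using ((hf _).comp_hasDerivAt t AffineMap.hasDerivAt_lineMap).inner ℝ
      (hasDerivAt_const t (x - y))
  have hmono : Monotone fun t : ℝ => ⟪f (AffineMap.lineMap y x t), x - y⟫_ℝ :=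
    monotone_of_hasDerivAt_nonneg hderiv fun t => isMonotoneOperator_clm_iff.1 (hf' _) _
  simpa [inner_sub_left] using hmono zero_le_one

/-- The Cayley transform `(id - f) ∘ (id + f)⁻¹` of a possibly nonlinear operator `f`. It is only
meaningful where `id + f` is bijective, since `Function.invFun` has junk values off the range. -/
noncomputable def cayleyTransform (f : E → E) : E → E :=
  (fun x => x - f x) ∘ invFun fun x => x + f x

namespace IsMonotoneOperator

variable {f : E → E}

theorem antilipschitzWith_id_add (hf : IsMonotoneOperator f) :
    AntilipschitzWith 1 fun x => x + f x :=
  AntilipschitzWith.of_le_mul_dist fun x y => by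
    simpa [dist_eq_norm, add_sub_add_comm] using norm_le_norm_add_of_inner_nonneg (hf x y)

theorem leftInverse_invFun_id_add (hf : IsMonotoneOperator f) :
    LeftInverse (invFun fun x => x + f x) fun x => x + f x :=
  leftInverse_invFun hf.antilipschitzWith_id_add.injective

theorem cayleyTransform_add (hf : IsMonotoneOperator f) (x : E) :
    cayleyTransform f (x + f x) = x - f x :=
  congrArg (fun x => x - f x) (hf.leftInverse_invFun_id_add x)

theorem lipschitzWith_cayleyTransform (hf : IsMonotoneOperator f)
    (hsurj : Surjective fun x => x + f x) : LipschitzWith 1 (cayleyTransform f) :=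
  LipschitzWith.of_dist_le_mul <| hsurj.forall₂.2 fun x y => by
    simpa [hf.cayleyTransform_add, dist_eq_norm, add_sub_add_comm, sub_sub_sub_comm] using
      norm_sub_le_norm_add_of_inner_nonneg (hf x y)

theorem hasFDerivAt_cayleyTransform (hf : IsMonotoneOperator f)
    (hsurj : Surjective fun x => x + f x) {f' : E →L[ℝ] E} {x : E} (hf' : HasFDerivAt f f' x)
    (hinv : (1 + f').IsInvertible) :
    HasFDerivAt (cayleyTransform f) ((1 - f') ∘L (1 + f').inverse) (x + f x) := by
  obtain ⟨e, he⟩ := hinv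
  set g : E → E := invFun fun x => x + f x
  have hright : RightInverse g fun x => x + f x := rightInverse_invFun hsurj
  have hgx : g (x + f x) = x := hf.leftInverse_invFun_id_add x
  have hgcont : Continuous g := (hf.antilipschitzWith_id_add.to_rightInverse hright).continuous
  have hadd : HasFDerivAt (fun x => x + f x) (e : E →L[ℝ] E) (g (x + f x)) := by
    rw [hgx, he]
    exact (hasFDerivAt_id x).add hf'
  have hsub : HasFDerivAt (fun x => x - f x) (1 - f') (g (x + f x)) := by
    rw [hgx]
    exact (hasFDerivAt_id x).sub hf'
  have hg : HasFDerivAt g (1 + f').inverse (x + f x) := by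
    rw [← he, ContinuousLinearMap.inverse_equiv]
    exact hadd.of_local_left_inverse hgcont.continuousAt <| .of_forall hright
  exact hsub.comp _ hg

theorem isInvertible_one_add [CompleteSpace E] {T : E →L[ℝ] E} (hT : IsMonotoneOperator T) :
    (1 + T).IsInvertible := by
  have hcoercive : IsCoercive ((innerSL ℝ).comp (1 + T)) := ⟨1, one_pos, fun v => by
    simpa [inner_add_left, ← sq] using isMonotoneOperator_clm_iff.1 hT v⟩
  refine ⟨hcoercive.continuousLinearEquivOfBilin, ContinuousLinearMap.ext fun v => ?_⟩
  exact ext_inner_right ℝ fun w => by simp [inner_add_left]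

end IsMonotoneOperator

theorem surjective_id_add_of_isMonotoneOperator_fderiv [CompleteSpace E] {f : E → E}
    {f' : E → E →L[ℝ] E} (hf : ∀ x, HasStrictFDerivAt f (f' x) x)
    (hf' : ∀ x, IsMonotoneOperator (f' x)) : Surjective fun x => x + f x :=
  have hmono : IsMonotoneOperator f :=
    isMonotoneOperator_of_hasFDerivAt (fun x => (hf x).hasFDerivAt) hf'
  surjective_of_antilipschitzWith_of_hasStrictFDerivAt hmono.antilipschitzWith_id_add
    (fun x => (hasStrictFDerivAt_id x).add (hf x)) fun x => (hf' x).isInvertible_one_add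

end MonotoneOperator

section Plane

theorem deriv_eq_deriv_of_lipschitzWith {V : Type*} [NormedAddCommGroup V] [NormedSpace ℂ V]
    [CompleteSpace V] {K : NNReal} {G : ℂ → V} (hG : Differentiable ℂ G) (hlip : LipschitzWith K G)
    (z w : ℂ) : deriv G z = deriv G w := by
  refine hG.deriv.apply_eq_apply_of_bounded (isBounded_iff_forall_norm_le.2 ⟨K, ?_⟩) z w
  rintro _ ⟨ζ, rfl⟩
  exact norm_deriv_le_of_lipschitz hlip

/-- The symmetric endomorphism `v ↦ a v + b v̄` of the real plane `ℂ`. Every symmetric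
endomorphism is of this form; its trace is `2 a` and its determinant is `a ^ 2 - ‖b‖ ^ 2`. -/
noncomputable def symmCLM (a : ℝ) (b : ℂ) : ℂ →L[ℝ] ℂ :=
  a • 1 + b • (Complex.conjCLE : ℂ →L[ℝ] ℂ)

theorem symmCLM_apply (a : ℝ) (b v : ℂ) : symmCLM a b v = a * v + b * conj v := by
  simp [symmCLM]

theorem neg_symmCLM (a : ℝ) (b : ℂ) : -symmCLM a b = symmCLM (-a) (-b) := by
  simp only [symmCLM, neg_add]
  congr 1 <;> ext1 v <;> simp

theorem isMonotoneOperator_symmCLM {a : ℝ} {b : ℂ} (h : ‖b‖ ≤ a) :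
    IsMonotoneOperator (symmCLM a b) := isMonotoneOperator_clm_iff.2 fun v => by
  have hinner : ⟪symmCLM a b v, v⟫_ℝ = a * ‖v‖ ^ 2 + (conj b * v ^ 2).re := by
    rw [symmCLM_apply, Complex.inner, ← Complex.normSq_eq_norm_sq]
    simp only [map_add, map_mul, Complex.conj_ofReal, Complex.conj_conj, Complex.mul_re,
      Complex.mul_im, Complex.add_re, Complex.add_im, Complex.ofReal_re, Complex.ofReal_im,
      Complex.conj_re, Complex.conj_im, Complex.normSq_apply, sq]
    ring
  have hre : -(‖b‖ * ‖v‖ ^ 2) ≤ (conj b * v ^ 2).re := by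
    rw [← norm_pow, ← RCLike.norm_conj b, ← norm_mul]
    exact (abs_le.1 (Complex.abs_re_le_norm _)).1
  rw [hinner]
  nlinarith [mul_le_mul_of_nonneg_right h (sq_nonneg ‖v‖)]

section DetOne

variable {a a' : ℝ} {b b' : ℂ}

theorem isMonotoneOperator_symmCLM_of_det_eq_one (ha : 0 < a) (hdet : a ^ 2 - ‖b‖ ^ 2 = 1) :
    IsMonotoneOperator (symmCLM a b) :=
  isMonotoneOperator_symmCLM (abs_le_of_sq_le_sq' (by linarith) ha.le).2

theorem conj_comp_one_sub_symmCLM (ha : 0 < a) (hdet : a ^ 2 - ‖b‖ ^ 2 = 1) :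
    (Complex.conjCLE : ℂ →L[ℝ] ℂ) ∘L (1 - symmCLM a b)
      = (-(conj b / (1 + a))) • (1 + symmCLM a b) := by
  have ha' : (1 + a : ℂ) ≠ 0 := by exact_mod_cast (by positivity : (1 + a) ≠ 0)
  have hdet' : (a : ℂ) ^ 2 - conj b * b = 1 := by
    rw [Complex.conj_mul', ← Complex.ofReal_pow]
    exact_mod_cast hdet
  ext1 v
  simp only [ContinuousLinearMap.comp_apply, ContinuousLinearEquiv.coe_coe,
    ContinuousAlgEquiv.coeCLE_apply, Complex.conjCAE_apply, sub_apply, add_apply, smul_apply,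
    one_apply_eq_self, symmCLM_apply, map_sub, map_add, map_mul, Complex.conj_ofReal,
    Complex.conj_conj, smul_eq_mul]
  field_simp
  linear_combination (-conj v) * hdet'

theorem symmCLM_coeff_eq_of_conj_div_eq (ha : 0 < a) (ha' : 0 < a') (hdet : a ^ 2 - ‖b‖ ^ 2 = 1)
    (hdet' : a' ^ 2 - ‖b'‖ ^ 2 = 1) (h : conj b / (1 + a) = conj b' / (1 + a')) :
    a = a' ∧ b = b' := by
  have hsq (α : ℝ) (β : ℂ) (hα : 0 < α) (hαβ : α ^ 2 - ‖β‖ ^ 2 = 1) :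
      ‖conj β / (1 + α)‖ ^ 2 = 1 - 2 / (1 + α) := by
    have hnorm : ‖(1 + α : ℂ)‖ = 1 + α := by
      exact_mod_cast Complex.norm_of_nonneg (by positivity : 0 ≤ 1 + α)
    rw [norm_div, hnorm, RCLike.norm_conj]
    field_simp
    linear_combination -hαβ
  have haa' : a = a' := by
    have := (hsq a b ha hdet).symm.trans <| (congrArg (‖·‖ ^ 2) h).trans (hsq a' b' ha' hdet')
    field_simp at this
    linarith
  subst haa'
  have ha0 : (1 + a : ℂ) ≠ 0 := by exact_mod_cast (by positivity : (1 + a) ≠ 0)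
  exact ⟨rfl, star_injective ((div_left_inj' ha0).1 h)⟩

theorem hasDerivAt_conj_cayleyTransform {f : ℂ → ℂ} (hmono : IsMonotoneOperator f)
    (hsurj : Surjective fun z => z + f z) (ha : 0 < a) (hdet : a ^ 2 - ‖b‖ ^ 2 = 1) {z : ℂ}
    (hf : HasFDerivAt f (symmCLM a b) z) :
    HasDerivAt (fun w => conj (cayleyTransform f w)) (-(conj b / (1 + a))) (z + f z) := by
  have hinv := (isMonotoneOperator_symmCLM_of_det_eq_one ha hdet).isInvertible_one_add
  have hreal := Complex.conjCLE.hasFDerivAt.comp (z + f z)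
    (hmono.hasFDerivAt_cayleyTransform hsurj hf hinv)
  rw [hasDerivAt_iff_hasFDerivAt]
  refine hasFDerivAt_of_restrictScalars ℝ hreal ?_
  rw [← ContinuousLinearMap.comp_assoc, conj_comp_one_sub_symmCLM ha hdet,
    ContinuousLinearMap.smul_comp, hinv.self_comp_inverse]
  ext1 v
  simp [mul_comm]

end DetOne

theorem forall_pos_or_forall_neg_of_continuous {X : Type*} [TopologicalSpace X]
    [PreconnectedSpace X] {a : X → ℝ} (ha : Continuous a) (h : ∀ x, a x ≠ 0) :
    (∀ x, 0 < a x) ∨ ∀ x, a x < 0 := by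
  by_contra! ⟨⟨x, hx⟩, y, hy⟩
  obtain ⟨z, hz⟩ := mem_range_of_exists_le_of_exists_ge ha ⟨x, hx⟩ ⟨y, hy⟩
  exact h z hz

section Rigidity

variable {f : ℂ → ℂ} {a : ℂ → ℝ} {b : ℂ → ℂ}

theorem symmCLM_coeff_eq_of_det_eq_one_of_pos
    (hf : ∀ z, HasStrictFDerivAt f (symmCLM (a z) (b z)) z)
    (hdet : ∀ z, a z ^ 2 - ‖b z‖ ^ 2 = 1) (ha : ∀ z, 0 < a z) (z w : ℂ) :
    a z = a w ∧ b z = b w := by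
  have hT (z : ℂ) : IsMonotoneOperator (symmCLM (a z) (b z)) :=
    isMonotoneOperator_symmCLM_of_det_eq_one (ha z) (hdet z)
  have hmono : IsMonotoneOperator f :=
    isMonotoneOperator_of_hasFDerivAt (fun z => (hf z).hasFDerivAt) hT
  have hsurj : Surjective fun z => z + f z :=
    surjective_id_add_of_isMonotoneOperator_fderiv hf hT
  have hderiv (z : ℂ) := hasDerivAt_conj_cayleyTransform hmono hsurj (ha z) (hdet z)
    (hf z).hasFDerivAt
  have hentire : Differentiable ℂ fun ζ => conj (cayleyTransform f ζ) :=
    hsurj.forall.2 fun z => (hderiv z).differentiableAt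
  have hlip : LipschitzWith 1 fun ζ => conj (cayleyTransform f ζ) := by
    rw [← one_mul 1]
    exact Complex.conjLIE.lipschitz.comp (hmono.lipschitzWith_cayleyTransform hsurj)
  have hconst := deriv_eq_deriv_of_lipschitzWith hentire hlip (z + f z) (w + f w)
  rw [(hderiv z).deriv, (hderiv w).deriv, neg_inj] at hconst
  exact symmCLM_coeff_eq_of_conj_div_eq (ha z) (ha w) (hdet z) (hdet w) hconst

theorem symmCLM_coeff_eq_of_det_eq_one (hf : ∀ z, HasStrictFDerivAt f (symmCLM (a z) (b z)) z)
    (hdet : ∀ z, a z ^ 2 - ‖b z‖ ^ 2 = 1) (ha : Continuous a) (z w : ℂ) :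
    a z = a w ∧ b z = b w := by
  have hne (z : ℂ) : a z ≠ 0 := fun h => by nlinarith [hdet z, sq_nonneg ‖b z‖]
  rcases forall_pos_or_forall_neg_of_continuous ha hne with hpos | hneg
  · exact symmCLM_coeff_eq_of_det_eq_one_of_pos hf hdet hpos z w
  · have hf' (z : ℂ) : HasStrictFDerivAt (-f) (symmCLM (-a z) (-b z)) z :=
      neg_symmCLM (a z) (b z) ▸ (hf z).neg
    simpa only [neg_inj] using symmCLM_coeff_eq_of_det_eq_one_of_pos hf'
      (by simpa only [neg_sq, norm_neg] using hdet) (fun z => neg_pos.2 (hneg z)) z w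

end Rigidity

end Plane

section ConstantSecondDerivative

variable {E F : Type*} [NormedAddCommGroup E] [NormedSpace ℝ E] [NormedAddCommGroup F]
  [NormedSpace ℝ F]

theorem eq_clm_add_of_hasFDerivAt_const {f : E → F} {L : E →L[ℝ] F}
    (hf : ∀ x, HasFDerivAt f L x) (x : E) : f x = L x + f 0 := by
  have hg (y : E) : HasFDerivAt (fun y => L y + f 0) L y := L.hasFDerivAt.add_const (f 0)
  exact congrFun (eq_of_fderiv_eq (𝕜 := ℝ) (fun y => (hf y).differentiableAt)
    (fun y => (hg y).differentiableAt) (fun y => (hf y).fderiv.trans (hg y).fderiv.symm) 0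
    (by simp)) x

theorem eq_quadratic_of_hasFDerivAt_const {f : E → F} {f' : E → E →L[ℝ] F}
    {B : E →L[ℝ] E →L[ℝ] F} (hf : ∀ x, HasFDerivAt f (f' x) x) (hf' : ∀ x, HasFDerivAt f' B x)
    (x : E) : f x = (1 / 2 : ℝ) • B x x + f' 0 x + f 0 := by
  have hsymm (v w : E) : B v w = B w v := second_derivative_symmetric hf (hf' 0) v w
  have hsub (y : E) : HasFDerivAt (fun y => f y - (1 / 2 : ℝ) • B y y) (f' 0) y := by
    refine ((hf y).sub ((B.hasFDerivAt.clm_apply (hasFDerivAt_id y)).const_smul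
      (1 / 2 : ℝ))).congr_fderiv ?_
    ext1 v
    simp only [eq_clm_add_of_hasFDerivAt_const hf' y, hsymm v y, sub_apply, add_apply, smul_apply,
      ContinuousLinearMap.comp_id, ContinuousLinearMap.flip_apply, id_eq]
    module
  rw [add_assoc, ← sub_eq_iff_eq_add']
  simpa using eq_clm_add_of_hasFDerivAt_const hsub x

end ConstantSecondDerivative

section Hessian

theorem clm_apply_eq_sum {𝕜 ι F : Type*} [RCLike 𝕜] [Fintype ι] [DecidableEq ι]
    [NormedAddCommGroup F] [NormedSpace 𝕜 F] (L : EuclideanSpace 𝕜 ι →L[𝕜] F)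
    (v : EuclideanSpace 𝕜 ι) : L v = ∑ i, v i • L (EuclideanSpace.single i 1) := by
  conv_lhs => rw [← (EuclideanSpace.basisFun ι 𝕜).sum_repr v]
  simp

variable {n : ℕ} {u : EuclideanSpace ℝ (Fin n) → ℝ} {x : EuclideanSpace ℝ (Fin n)}

theorem hessianMatrix_apply (hu : DifferentiableAt ℝ (fderiv ℝ u) x) (i j : Fin n) :
    hessianMatrix u x i j =
      fderiv ℝ (fderiv ℝ u) x (EuclideanSpace.single i 1) (EuclideanSpace.single j 1) := by
  simp [hessianMatrix, fderiv_clm_apply hu (differentiableAt_const _)]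

theorem hessianMatrix_isSymm (hu : ContDiffAt ℝ 2 u x) : (hessianMatrix u x).IsSymm := by
  have hdu : DifferentiableAt ℝ (fderiv ℝ u) x :=
    (hu.fderiv_right (m := 1) le_rfl).differentiableAt one_ne_zero
  ext i j
  rw [Matrix.transpose_apply, hessianMatrix_apply hdu, hessianMatrix_apply hdu]
  exact hu.isSymmSndFDerivAt (by simp) _ _

theorem fderiv_fderiv_apply_eq_sum (hu : DifferentiableAt ℝ (fderiv ℝ u) x)
    (v w : EuclideanSpace ℝ (Fin n)) :
    fderiv ℝ (fderiv ℝ u) x v w = ∑ i, ∑ j, hessianMatrix u x i j * v i * w j := by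
  calc fderiv ℝ (fderiv ℝ u) x v w
      = ∑ i, v i • fderiv ℝ (fderiv ℝ u) x (EuclideanSpace.single i 1) w := by
        simp [clm_apply_eq_sum (fderiv ℝ (fderiv ℝ u) x) v]
    _ = ∑ i, ∑ j, hessianMatrix u x i j * v i * w j := by
        simp only [clm_apply_eq_sum _ w, hessianMatrix_apply hu, smul_eq_mul, Finset.mul_sum,
          mul_comm, mul_left_comm]

theorem isQuadraticPoly_of_hessianMatrix_eq (hu : ContDiff ℝ 2 u)
    {A : Matrix (Fin n) (Fin n) ℝ} (hA : ∀ x, hessianMatrix u x = A) : IsQuadraticPoly u := by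
  have hdu : Differentiable ℝ (fderiv ℝ u) :=
    (hu.fderiv_right (m := 1) le_rfl).differentiable one_ne_zero
  have hconst (x : EuclideanSpace ℝ (Fin n)) :
      HasFDerivAt (fderiv ℝ u) (fderiv ℝ (fderiv ℝ u) 0) x := by
    have : fderiv ℝ (fderiv ℝ u) x = fderiv ℝ (fderiv ℝ u) 0 := by
      ext v w
      rw [fderiv_fderiv_apply_eq_sum (hdu x), fderiv_fderiv_apply_eq_sum (hdu 0), hA, hA]
    exact this ▸ (hdu x).hasFDerivAt
  refine ⟨A, fun i => fderiv ℝ u 0 (EuclideanSpace.single i 1), u 0,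
    hA 0 ▸ hessianMatrix_isSymm hu.contDiffAt, fun x => ?_⟩
  have htaylor := eq_quadratic_of_hasFDerivAt_const
    (fun x => (hu.differentiable two_ne_zero x).hasFDerivAt) hconst x
  rw [fderiv_fderiv_apply_eq_sum (hdu 0), hA, clm_apply_eq_sum (fderiv ℝ u 0) x] at htaylor
  simpa only [smul_eq_mul, mul_comm] using htaylor

end Hessian

section PlaneMatrix

variable {M N : Matrix (Fin 2) (Fin 2) ℝ}

/-- The coefficient `a` in the presentation `v ↦ a v + b v̄` of a symmetric `2 × 2` matrix. -/
noncomputable def conformalPart (M : Matrix (Fin 2) (Fin 2) ℝ) : ℝ := M.trace / 2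

/-- The coefficient `b` in the presentation `v ↦ a v + b v̄` of a symmetric `2 × 2` matrix. -/
noncomputable def anticonformalPart (M : Matrix (Fin 2) (Fin 2) ℝ) : ℂ :=
  ⟨(M 0 0 - M 1 1) / 2, M 0 1⟩

theorem conformalPart_sq_sub_norm_sq (hM : M.IsSymm) :
    conformalPart M ^ 2 - ‖anticonformalPart M‖ ^ 2 = M.det := by
  rw [Matrix.det_fin_two, hM.apply 0 1, ← Complex.normSq_eq_norm_sq, Complex.normSq_apply,
    conformalPart, anticonformalPart, Matrix.trace_fin_two]
  ring

theorem symmCLM_conformalPart_anticonformalPart_apply (hM : M.IsSymm) (v : ℂ) :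
    symmCLM (conformalPart M) (anticonformalPart M) v =
      ⟨M 0 0 * v.re + M 0 1 * v.im, M 1 0 * v.re + M 1 1 * v.im⟩ := by
  rw [symmCLM_apply, hM.apply 0 1]
  apply Complex.ext <;> simp [conformalPart, anticonformalPart, Matrix.trace_fin_two] <;> ring

theorem eq_of_conformalPart_eq_of_anticonformalPart_eq (hM : M.IsSymm) (hN : N.IsSymm)
    (ha : conformalPart M = conformalPart N) (hb : anticonformalPart M = anticonformalPart N) :
    M = N := by
  rw [conformalPart, conformalPart, Matrix.trace_fin_two, Matrix.trace_fin_two] at ha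
  obtain ⟨hdiag, hoff⟩ := Complex.ext_iff.1 hb
  simp only [anticonformalPart] at hdiag hoff
  have h00 : M 0 0 = N 0 0 := by linarith
  have h10 : M 1 0 = N 1 0 := by rw [← hM.apply 1 0, ← hN.apply 1 0, hoff]
  have h11 : M 1 1 = N 1 1 := by linarith
  rw [M.eta_fin_two, N.eta_fin_two, h00, hoff, h10, h11]

end PlaneMatrix

section Gradient

open Complex (orthonormalBasisOneI)

variable {u : EuclideanSpace ℝ (Fin 2) → ℝ}

/-- The gradient of `u` as a vector field on `ℂ`, under the standard identification of `ℂ` with the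
Euclidean plane. -/
noncomputable def complexGradient (u : EuclideanSpace ℝ (Fin 2) → ℝ) (z : ℂ) : ℂ :=
  fderiv ℝ u (orthonormalBasisOneI.repr z) (EuclideanSpace.single 0 1) • 1 +
    fderiv ℝ u (orthonormalBasisOneI.repr z) (EuclideanSpace.single 1 1) • Complex.I

theorem hasStrictFDerivAt_complexGradient (hu : ContDiff ℝ 2 u) (z : ℂ) :
    HasStrictFDerivAt (complexGradient u)
      (symmCLM (conformalPart (hessianMatrix u (orthonormalBasisOneI.repr z)))
        (anticonformalPart (hessianMatrix u (orthonormalBasisOneI.repr z)))) z := by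
  set x := orthonormalBasisOneI.repr z
  have hdu : HasStrictFDerivAt (fderiv ℝ u) (fderiv ℝ (fderiv ℝ u) x) x :=
    (hu.fderiv_right (m := 1) le_rfl).contDiffAt.hasStrictFDerivAt one_ne_zero
  have hpartial (j : Fin 2) :=
    (hdu.clm_apply (hasStrictFDerivAt_const (EuclideanSpace.single j 1) x)).comp z
      orthonormalBasisOneI.repr.toContinuousLinearEquiv.hasStrictFDerivAt
  have hsymm : (hessianMatrix u x).IsSymm := hessianMatrix_isSymm hu.contDiffAt
  refine (((hpartial 0).smul_const (1 : ℂ)).add ((hpartial 1).smul_const Complex.I)).congr_fderiv ?_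
  ext1 v
  rw [symmCLM_conformalPart_anticonformalPart_apply hsymm]
  simp [hsymm.apply 0 1, fderiv_fderiv_apply_eq_sum hdu.differentiableAt, Complex.ext_iff]

theorem continuous_conformalPart_hessianMatrix (hu : ContDiff ℝ 2 u) :
    Continuous fun x => conformalPart (hessianMatrix u x) := by
  have hdu : ContDiff ℝ 1 (fderiv ℝ u) := hu.fderiv_right le_rfl
  have : Continuous (fderiv ℝ (fderiv ℝ u)) := hdu.continuous_fderiv one_ne_zero
  simp only [conformalPart, Matrix.trace_fin_two,
    hessianMatrix_apply (hdu.differentiable one_ne_zero _)]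
  fun_prop

end Gradient

theorem jorgens_general (u : EuclideanSpace ℝ (Fin 2) → ℝ) (hu : ContDiff ℝ 2 u)
    (hMA : ∀ x, (hessianMatrix u x).det = 1) : IsQuadraticPoly u := by
  have hsymm (x) : (hessianMatrix u x).IsSymm := hessianMatrix_isSymm hu.contDiffAt
  have hparts := symmCLM_coeff_eq_of_det_eq_one (hasStrictFDerivAt_complexGradient hu)
    (fun z => (conformalPart_sq_sub_norm_sq (hsymm _)).trans (hMA _))
    ((continuous_conformalPart_hessianMatrix hu).comp (LinearIsometryEquiv.continuous _))
  refine isQuadraticPoly_of_hessianMatrix_eq hu (A := hessianMatrix u 0) fun x => ?_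
  obtain ⟨ha, hb⟩ := hparts (Complex.orthonormalBasisOneI.repr.symm x) 0
  rw [LinearIsometryEquiv.apply_symm_apply, map_zero] at ha hb
  exact eq_of_conformalPart_eq_of_anticonformalPart_eq (hsymm x) (hsymm 0) ha hb

/-- Jörgens' theorem. -/
theorem jorgens (u : EuclideanSpace ℝ (Fin 2) → ℝ)
    (hu : ContDiff ℝ (⊤ : ℕ∞) u)
    (hMA : ∀ x, (hessianMatrix u x).det = 1) :
    IsQuadraticPoly u :=
  jorgens_general u (hu.of_le (WithTop.coe_le_coe.2 (le_top (a := (2 : ℕ∞))))) hMA
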